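/- Let Σ_A(ℕ) be a topologically mixing, finitely primitive (BIP) countable Markov shift and f : Σ_A(ℕ) → ℝ satisfy the Walters condition with Var_1 f < ∞ and P(f) < ∞. Then for every maximizing measure μ of f, supp(μ) ⊆ Ω(f,σ), where Ω(f,σ) = {x ∈ Σ_A(ℕ) : S_f(x,x) = 0} is the Aubry set. -/

import Mathlib

open Filter Topology MeasureTheory
open scoped ENNReal

/-- The countable Markov shift over alphabet ℕ determined by the 0-1 matrix `A`. -/
def MarkovShift (A : ℕ → ℕ → Bool) : Type :=
  {x : ℕ → ℕ // ∀ i, A (x i) (x (i + 1)) = true}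

namespace MarkovShift

variable {A : ℕ → ℕ → Bool}

instance : TopologicalSpace (MarkovShift A) :=
  instTopologicalSpaceSubtype

instance : MeasurableSpace (MarkovShift A) := borel _

instance : BorelSpace (MarkovShift A) := ⟨rfl⟩

/-- The shift map. -/
def shift (x : MarkovShift A) : MarkovShift A :=
  ⟨fun n => x.1 (n + 1), fun i => x.2 (i + 1)⟩

/-- The cylinder set determined by a finite word. -/
def cylinder (w : List ℕ) : Set (MarkovShift A) :=
  {x | ∀ i : Fin w.length, x.1 i = w.get i}

/-- The cylinder set determined by the first `m` coordinates of `x`. -/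
def cylOf (x : MarkovShift A) (m : ℕ) : Set (MarkovShift A) :=
  {y | ∀ i < m, y.1 i = x.1 i}

/-- A symbol is admissible when its cylinder is nonempty. -/
def Admissible (A : ℕ → ℕ → Bool) (a : ℕ) : Prop :=
  ∃ x : MarkovShift A, x.1 0 = a

/-- Topologically mixing. -/
def TopologicallyMixing (A : ℕ → ℕ → Bool) : Prop :=
  ∀ a b : ℕ, Admissible A a → Admissible A b →
    ∃ N : ℕ, ∀ n ≥ N, ∃ x : MarkovShift A, x.1 0 = a ∧ (shift^[n] x).1 0 = b

/-- Finitely primitive (BIP). -/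
def FinitelyPrimitive (A : ℕ → ℕ → Bool) : Prop :=
  ∃ (K₀ : ℕ) (F : Finset ℕ), ∀ a b : ℕ, Admissible A a → Admissible A b →
    ∃ w : List ℕ, w.length = K₀ ∧ (∀ c ∈ w, c ∈ F) ∧
      List.Chain' (fun u v => A u v = true) (a :: (w ++ [b]))

/-- First coordinate where two distinct points disagree. -/
noncomputable def firstDiff (x y : MarkovShift A) (h : x ≠ y) : ℕ :=
  Nat.find (Function.ne_iff.mp (fun hxy : x.1 = y.1 => h (Subtype.ext hxy)))

open Classical in
/-- The metric `d(x,y) = r^{t(x,y)}`. -/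
noncomputable def dist' (r : ℝ) (x y : MarkovShift A) : ℝ :=
  if h : x = y then 0 else r ^ firstDiff x y h

/-- Birkhoff sum `S_n f`. -/
def birkhoff (f : MarkovShift A → ℝ) (n : ℕ) (x : MarkovShift A) : ℝ :=
  ∑ j ∈ Finset.range n, f (shift^[j] x)

/-- The set of values `|S_n f x - S_n f y|` over pairs agreeing on the first `m` coordinates. -/
def varSet (f : MarkovShift A → ℝ) (n m : ℕ) : Set ℝ :=
  {c | ∃ x y : MarkovShift A, (∀ i < m, x.1 i = y.1 i) ∧ c = |birkhoff f n x - birkhoff f n y|}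

/-- `Var_m (S_n f)`. -/
noncomputable def varBirk (f : MarkovShift A → ℝ) (n m : ℕ) : ℝ := sSup (varSet f n m)

/-- `Var_1 f < ∞`. -/
def Var1Finite (f : MarkovShift A → ℝ) : Prop := BddAbove (varSet f 1 1)

/-- The set whose supremum is `sup_{n ≥ 1} Var_{n+k}(S_n f)`. -/
def waltersSet (f : MarkovShift A → ℝ) (k : ℕ) : Set ℝ :=
  {c | ∃ n, 1 ≤ n ∧ c ∈ varSet f n (n + k)}

/-- `M_k = sup_{n ≥ 1} Var_{n+k}(S_n f)`. -/
noncomputable def waltersSup (f : MarkovShift A → ℝ) (k : ℕ) : ℝ := sSup (waltersSet f k)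

/-- The Walters condition. -/
def SatisfiesWalters (f : MarkovShift A → ℝ) : Prop :=
  (∀ k, 1 ≤ k → BddAbove (waltersSet f k)) ∧
    Tendsto (fun k => waltersSup f k) atTop (𝓝 0)

/-- The partition function `Z_n(f,a) = Σ_{σ^n x = x, x₀ = a} e^{S_n f (x)}`. -/
noncomputable def partitionSum (f : MarkovShift A → ℝ) (n : ℕ) (a : ℕ) : ℝ :=
  ∑' x : {x : MarkovShift A // shift^[n] x = x ∧ x.1 0 = a}, Real.exp (birkhoff f n x.1)

/-- `f` has (finite) Gurevich pressure `p`. -/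
def HasGurevichPressure (f : MarkovShift A → ℝ) (p : ℝ) : Prop :=
  ∀ a : ℕ, Admissible A a →
    (∀ n, 1 ≤ n → Summable fun x : {x : MarkovShift A // shift^[n] x = x ∧ x.1 0 = a} =>
        Real.exp (birkhoff f n x.1)) ∧
    Tendsto (fun n : ℕ => (1 / (n : ℝ)) * Real.log (partitionSum f n a)) atTop (𝓝 p)

/-- σ-invariant Borel probability measure. -/
def IsInvariantProb (μ : Measure (MarkovShift A)) : Prop :=
  IsProbabilityMeasure μ ∧ μ.map shift = μ

/-- `m(f)`, the maximal ergodic average. -/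
noncomputable def mf (f : MarkovShift A → ℝ) : ℝ :=
  sSup {c | ∃ μ : Measure (MarkovShift A),
    IsInvariantProb μ ∧ Integrable f μ ∧ ∫ x, f x ∂μ = c}

/-- A maximizing measure for `f`. -/
def IsMaximizing (f : MarkovShift A → ℝ) (μ : Measure (MarkovShift A)) : Prop :=
  IsInvariantProb μ ∧ Integrable f μ ∧ ∫ x, f x ∂μ = mf f

/-- Bounded real valued function. -/
def BoundedFun (g : MarkovShift A → ℝ) : Prop := ∃ C, ∀ x, |g x| ≤ C

/-- A bounded calibrated sub-action for `f`. -/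
def IsCalibratedSubaction (f V : MarkovShift A → ℝ) : Prop :=
  Continuous V ∧ BoundedFun V ∧
    (∀ x, f x + V x - V (shift x) - mf f ≤ 0) ∧
    (∀ y, ∃ x, shift x = y ∧ f x + V x - V (shift x) - mf f = 0)

/-- The Ruelle transfer operator `(L_g u)(x) = Σ_{σ y = x} e^{g(y)} u(y)`. -/
noncomputable def ruelle (g u : MarkovShift A → ℝ) (x : MarkovShift A) : ℝ :=
  ∑' y : {y : MarkovShift A // shift y = x}, Real.exp (g y.1) * u y.1

/-- Ruelle-Perron-Frobenius data for the potential `f` with pressure `p`: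
eigenfunction `h`, eigenmeasure `ν`. -/
def IsRPF (f : MarkovShift A → ℝ) (p : ℝ) (h : MarkovShift A → ℝ)
    (ν : Measure (MarkovShift A)) : Prop :=
  Continuous h ∧ (∀ x, 0 < h x) ∧
    (∀ x, ruelle f h x = Real.exp p * h x) ∧
    IsProbabilityMeasure ν ∧
    (∀ g : MarkovShift A → ℝ, Continuous g → BoundedFun g →
      ∫ x, ruelle f g x ∂ν = Real.exp p * ∫ x, g x ∂ν) ∧
    ∫ x, h x ∂ν = 1

/-- The Gibbs measure `dμ = h dν`. -/
noncomputable def gibbs (h : MarkovShift A → ℝ) (ν : Measure (MarkovShift A)) :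
    Measure (MarkovShift A) :=
  ν.withDensity fun x => ENNReal.ofReal (h x)

/-- The Mañé potential `S_f(x,y)` (with respect to the metric of parameter `r`). -/
noncomputable def manePot (r : ℝ) (f : MarkovShift A → ℝ) (x y : MarkovShift A) : EReal :=
  ⨅ ε : {ε : ℝ // 0 < ε}, ⨆ n : {n : ℕ // 1 ≤ n},
    ⨆ _z : {z : MarkovShift A // dist' r x z < ε.1 ∧ shift^[n.1] z = y},
      ((birkhoff (fun w => f w - mf f) n.1 _z.1 : ℝ) : EReal)

/-- The (topological) support of a measure. -/
def msupport (μ : Measure (MarkovShift A)) : Set (MarkovShift A) :=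
  {x | ∀ U : Set (MarkovShift A), IsOpen U → x ∈ U → 0 < μ U}

end MarkovShift

namespace MarkovShift

/-!
An orbit segment from near `x` to `x` is shadowed by a periodic orbit, whose Birkhoff average is at
most `m(f)`, so the Walters condition gives `S_f(x,x) ≤ 0`. Conversely, let `x ∈ supp μ`, let `U` be
a cylinder around `x`, and let `B` be the invariant set of points that visit `U` infinitely often.
If the sums of `f - m(f)` over all returns to `U` were at most some `c < 0`, then its integral over
`B` would be at most `c μ(U) < 0`, whereas it cannot be negative: it is at most zero over `Bᶜ` and
equal to zero over the whole space. So some return to `U` has sum greater than `c`, and replacing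
the tail of its orbit by `x` gives `S_f(x,x) ≥ 0`.
-/

section ErgodicTheory

open Function

variable {X : Type*} {T : X → X} {U : Set X}

/-- The first time `n ≥ 0` at which the orbit of `x` under `T` lies in `U`, and the junk value `0`
if the orbit avoids `U`. -/
noncomputable def entranceTime (T : X → X) (U : Set X) (x : X) : ℕ :=
  sInf {n | T^[n] x ∈ U}

theorem entranceTime_of_mem {x : X} (hx : x ∈ U) : entranceTime T U x = 0 :=
  Nat.sInf_eq_zero.2 (.inl hx)

theorem iterate_entranceTime_mem {x : X} (hx : ∃ n, T^[n] x ∈ U) : T^[entranceTime T U x] x ∈ U :=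
  Nat.sInf_mem hx

theorem entranceTime_of_notMem {x : X} (hx : ∃ n, T^[n] x ∈ U) (hxU : x ∉ U) :
    entranceTime T U x = entranceTime T U (T x) + 1 := by
  refine (Nat.sInf_add (Nat.one_le_iff_ne_zero.2 fun h0 => hxU ?_)).symm
  exact (h0 ▸ iterate_entranceTime_mem hx : T^[0] x ∈ U)

variable [MeasurableSpace X] {μ : Measure X}

/-- Truncation of a real number to the interval `[-M, M]`. -/
def clamp (M t : ℝ) : ℝ := max (min t M) (-M)

theorem clamp_mono (M : ℝ) : Monotone (clamp M) :=
  fun _ _ hst => max_le_max_right _ (min_le_min_right _ hst)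

theorem clamp_sub_clamp_le {M s t : ℝ} (hst : s ≤ t) : clamp M t - clamp M s ≤ t - s := by
  have hlip : LipschitzWith 1 (clamp M) := (LipschitzWith.id.min_const M).max_const (-M)
  calc clamp M t - clamp M s ≤ |clamp M t - clamp M s| := le_abs_self _
    _ ≤ |t - s| := by simpa [Real.dist_eq] using hlip.dist_le_mul t s
    _ = t - s := abs_of_nonneg (sub_nonneg.2 hst)

theorem measurable_clamp (M : ℝ) : Measurable (clamp M) :=
  (measurable_id.min measurable_const).max measurable_const

theorem abs_clamp_le {M : ℝ} (hM : 0 ≤ M) (t : ℝ) : |clamp M t| ≤ M :=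
  abs_le.2 ⟨le_max_right _ _, max_le (min_le_right _ _) (neg_le_self hM)⟩

theorem clamp_of_abs_le {M t : ℝ} (h : |t| ≤ M) : clamp M t = t := by
  rw [clamp, min_eq_left (abs_le.1 h).2, max_eq_left (abs_le.1 h).1]

theorem tendsto_clamp (t : ℝ) : Tendsto (fun M => clamp M t) atTop (𝓝 t) :=
  tendsto_const_nhds.congr' <|
    (eventually_ge_atTop |t|).mono fun _ hM => (clamp_of_abs_le hM).symm

theorem integral_comp_sub_eq_zero (hT : MeasurePreserving T μ μ) {h : X → ℝ}
    (hh : Integrable h μ) : ∫ x, (h (T x) - h x) ∂μ = 0 := by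
  rw [integral_sub (f := fun x => h (T x)) (hT.integrable_comp_of_integrable hh) hh, sub_eq_zero]
  conv_rhs => rw [← hT.map_eq]
  exact (integral_map hT.measurable.aemeasurable
    (hT.map_eq.symm ▸ hh.aestronglyMeasurable)).symm

-- If `h` is integrable this is invariance of the integral. In general the truncations of `h` are
-- integrable and shrink its increments, so dominated convergence applies to the maximum of the
-- truncated increments and `ψ`.
theorem integral_nonneg_of_comp_sub_le_ae [IsFiniteMeasure μ] (hT : MeasurePreserving T μ μ)
    {h ψ : X → ℝ} (hh : Measurable h) (hψ : Integrable ψ μ)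
    (hle : ∀ᵐ x ∂μ, h (T x) - h x ≤ ψ x) : 0 ≤ ∫ x, ψ x ∂μ := by
  let φ : ℕ → X → ℝ := fun M x => max (clamp M (h (T x)) - clamp M (h x)) (ψ x)
  have hclamp (M : ℕ) : Integrable (fun x => clamp M (h x)) μ :=
    .of_bound ((measurable_clamp M).comp hh).aestronglyMeasurable M
      (.of_forall fun _ => abs_clamp_le M.cast_nonneg _)
  have hincr (M : ℕ) : Integrable (fun x => clamp M (h (T x)) - clamp M (h x)) μ :=
    (hT.integrable_comp_of_integrable (hclamp M)).sub (hclamp M)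
  have hφ (M : ℕ) : Integrable (φ M) μ := (hincr M).sup hψ
  have hφ_nonneg (M : ℕ) : 0 ≤ ∫ x, φ M x ∂μ :=
    (integral_comp_sub_eq_zero hT (hclamp M)).symm.trans_le
      (integral_mono (hincr M) (hφ M) fun _ => le_max_left _ _)
  have hφ_le (M : ℕ) : ∀ᵐ x ∂μ, ‖φ M x‖ ≤ |ψ x| := by
    filter_upwards [hle] with x hx
    refine abs_le.2 ⟨(neg_abs_le _).trans (le_max_right _ _), max_le ?_ (le_abs_self _)⟩
    rcases le_total (h (T x)) (h x) with hdecr | hincr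
    · exact (sub_nonpos.2 (clamp_mono M hdecr)).trans (abs_nonneg _)
    · exact (clamp_sub_clamp_le hincr).trans (hx.trans (le_abs_self _))
  have hφ_tendsto : ∀ᵐ x ∂μ, Tendsto (fun M => φ M x) atTop (𝓝 (ψ x)) := by
    filter_upwards [hle] with x hx
    rw [← max_eq_right hx]
    exact (((tendsto_clamp _).sub (tendsto_clamp _)).comp tendsto_natCast_atTop_atTop).max
      tendsto_const_nhds
  exact ge_of_tendsto' (tendsto_integral_of_dominated_convergence _
    (fun M => (hφ M).aestronglyMeasurable) hψ.abs hφ_le hφ_tendsto) hφ_nonneg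

theorem measurable_entranceTime (hT : Measurable T) (hU : MeasurableSet U) :
    Measurable (entranceTime T U) := by
  have hpre (m : ℕ) : MeasurableSet (T^[m] ⁻¹' U) := hT.iterate m hU
  refine measurable_of_Iic fun n => ?_
  have : entranceTime T U ⁻¹' Set.Iic n =
      (⋃ m ≤ n, T^[m] ⁻¹' U) ∪ (⋃ m, T^[m] ⁻¹' U)ᶜ := by
    ext x
    by_cases hx : ∃ m, T^[m] x ∈ U
    · have hle : entranceTime T U x ≤ n ↔ ∃ m ≤ n, T^[m] x ∈ U :=
        ⟨fun h => ⟨_, h, iterate_entranceTime_mem hx⟩,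
          fun ⟨_, hmn, hm⟩ => (Nat.sInf_le hm).trans hmn⟩
      simpa [not_forall_not.2 hx] using hle
    · simp [entranceTime, not_exists.1 hx]
  rw [this]
  exact (MeasurableSet.iUnion fun m => .iUnion fun _ => hpre m).union
    (MeasurableSet.iUnion hpre).compl

theorem measurable_birkhoffSum (hT : Measurable T) {g : X → ℝ} (hg : Measurable g) (n : ℕ) :
    Measurable (birkhoffSum T g n) :=
  Finset.measurable_sum _ fun j _ => hg.comp (hT.iterate j)

-- The coboundary of the Birkhoff sum up to the entrance into `U` is `-g` off `U`, and on `U` it is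
-- `-g` plus the sum up to the first return.
theorem integral_le_of_forall_return_birkhoffSum_le [IsFiniteMeasure μ]
    (hT : MeasurePreserving T μ μ) {g : X → ℝ} (hg : Measurable g) (hgi : Integrable g μ)
    (hU : MeasurableSet U) (hvisit : ∀ᵐ x ∂μ, ∃ n, T^[n] x ∈ U) {c : ℝ}
    (hreturn : ∀ x ∈ U, ∀ n, 1 ≤ n → T^[n] x ∈ U → birkhoffSum T g n x ≤ c) :
    ∫ x, g x ∂μ ≤ μ.real U * c := by
  let h : X → ℝ := fun x => birkhoffSum T g (entranceTime T U x) x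
  have hh : Measurable h :=
    (measurable_from_prod_countable_right (f := fun q : ℕ × X => birkhoffSum T g q.1 q.2)
      (measurable_birkhoffSum hT.measurable hg)).comp
      ((measurable_entranceTime hT.measurable hU).prodMk measurable_id)
  have hle : ∀ᵐ x ∂μ, h (T x) - h x ≤ U.indicator (fun _ => c) x - g x := by
    filter_upwards [hvisit, hT.quasiMeasurePreserving.ae hvisit] with x hx hTx
    by_cases hxU : x ∈ U
    · have hsum := hreturn x hxU _ (Nat.le_add_left 1 _) (iterate_entranceTime_mem hTx)
      rw [birkhoffSum_succ'] at hsum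
      simp only [h, entranceTime_of_mem hxU, birkhoffSum_zero, Set.indicator_of_mem hxU]
      linarith
    · simp only [h, entranceTime_of_notMem hx hxU, birkhoffSum_succ', Set.indicator_of_notMem hxU]
      linarith
  have hc : Integrable (U.indicator fun _ => c) μ := (integrable_const c).indicator hU
  have hnonneg := integral_nonneg_of_comp_sub_le_ae hT hh (hc.sub hgi) hle
  simp only [Pi.sub_apply] at hnonneg
  rw [integral_sub hc hgi, integral_indicator_const c hU, smul_eq_mul] at hnonneg
  exact sub_nonneg.1 hnonneg

theorem exists_return_lt_birkhoffSum [IsFiniteMeasure μ] (hT : MeasurePreserving T μ μ)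
    {g : X → ℝ} (hg : Measurable g) (hgi : Integrable g μ)
    (hinv : ∀ B, MeasurableSet B → T ⁻¹' B = B → 0 ≤ ∫ x in B, g x ∂μ)
    (hU : MeasurableSet U) (hU0 : μ U ≠ 0) {c : ℝ} (hc : c < 0) :
    ∃ x ∈ U, ∃ n, 1 ≤ n ∧ T^[n] x ∈ U ∧ c < birkhoffSum T g n x := by
  by_contra! hreturn
  let B : Set X := {x | ∃ᶠ n in atTop, T^[n] x ∈ U}
  have hB : MeasurableSet B := by
    have : B = limsup (fun n => T^[n] ⁻¹' U) atTop := by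
      ext x; exact (mem_limsup_iff_frequently_mem (s := fun n => T^[n] ⁻¹' U)).symm
    exact this ▸ .measurableSet_limsup fun n => hT.measurable.iterate n hU
  have hTB : T ⁻¹' B = B := by
    ext x
    change (∃ᶠ n in atTop, T^[n + 1] x ∈ U) ↔ ∃ᶠ n in atTop, T^[n] x ∈ U
    conv_rhs => rw [← map_add_atTop_eq_nat 1, frequently_map]
  have hTrestrict : MeasurePreserving T (μ.restrict B) (μ.restrict B) := by
    simpa only [hTB] using hT.restrict_preimage hB
  have hvisit : ∀ᵐ x ∂μ.restrict B, ∃ n, T^[n] x ∈ U :=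
    ae_restrict_of_forall_mem hB fun _ hx => hx.exists
  have hle :=
    integral_le_of_forall_return_birkhoffSum_le hTrestrict hg hgi.restrict hU hvisit hreturn
  have hpos : 0 < (μ.restrict B).real U := by
    have : μ (U ∩ B) = μ U :=
      hT.conservative.measure_inter_frequently_image_mem_eq hU.nullMeasurableSet
    rw [measureReal_restrict_apply hU, measureReal_def, this]
    exact ENNReal.toReal_pos hU0 (measure_ne_top _ _)
  exact (mul_neg_of_pos_of_neg hpos hc).not_ge ((hinv B hB hTB).trans hle)

/-- The average of the Dirac masses along the orbit segment `x, T x, …, T^(n-1) x`; it is the zero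
measure for `n = 0`. -/
noncomputable def orbitMeasure (T : X → X) (n : ℕ) (x : X) : Measure X :=
  (n : ℝ≥0∞)⁻¹ • ∑ j ∈ Finset.range n, Measure.dirac (T^[j] x)

theorem isProbabilityMeasure_orbitMeasure {n : ℕ} (hn : n ≠ 0) (x : X) :
    IsProbabilityMeasure (orbitMeasure T n x) :=
  ⟨by simp [orbitMeasure, ENNReal.inv_mul_cancel, hn]⟩

theorem measurePreserving_orbitMeasure (hT : Measurable T) {n : ℕ} {x : X}
    (hx : IsPeriodicPt T n x) :
    MeasurePreserving T (orbitMeasure T n x) (orbitMeasure T n x) := by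
  refine ⟨hT, ?_⟩
  rw [orbitMeasure, Measure.map_smul]
  congr 1
  calc (∑ j ∈ Finset.range n, Measure.dirac (T^[j] x)).map T
      = ∑ j ∈ Finset.range n, Measure.dirac (T^[j + 1] x) := by
        rw [← Measure.mapₗ_apply_of_measurable hT, map_sum]
        simp only [Measure.mapₗ_apply_of_measurable hT, Measure.map_dirac' hT,
          iterate_succ_apply']
    _ = ∑ j ∈ Finset.range n, Measure.dirac (T^[j] x) := by
        cases n with
        | zero => simp only [Finset.range_zero, Finset.sum_empty]
        | succ m => rw [Finset.sum_range_succ, Finset.sum_range_succ', hx.eq, iterate_zero_apply]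

theorem integrable_orbitMeasure {g : X → ℝ} (hg : StronglyMeasurable g) (n : ℕ) (x : X) :
    Integrable g (orbitMeasure T n x) := by
  rcases eq_or_ne n 0 with rfl | hn
  · simp [orbitMeasure]
  · exact (integrable_finsetSum_measure.2 fun j _ =>
      integrable_dirac' hg enorm_lt_top).smul_measure (by simp [hn])

theorem integral_orbitMeasure {g : X → ℝ} (hg : StronglyMeasurable g) (n : ℕ) (x : X) :
    ∫ y, g y ∂orbitMeasure T n x = birkhoffAverage ℝ T g n x := by
  rw [orbitMeasure, integral_smul_measure,
    integral_finsetSum_measure fun j _ => integrable_dirac' hg enorm_lt_top]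
  simp [integral_dirac' _ _ hg, birkhoffAverage, birkhoffSum]

end ErgodicTheory

section Shift

open Function

variable {A : ℕ → ℕ → Bool} {x y z : MarkovShift A}

theorem ext (h : ∀ i, x.1 i = y.1 i) : x = y :=
  Subtype.ext (funext h)

theorem iterate_shift_apply (n : ℕ) (x : MarkovShift A) (i : ℕ) :
    (shift^[n] x).1 i = x.1 (i + n) := by
  induction n generalizing x with
  | zero => rfl
  | succ _ ih => exact ih (shift x)

theorem continuous_shift : Continuous (shift : MarkovShift A → MarkovShift A) := by
  refine Continuous.subtype_mk ?_ _
  exact continuous_pi fun n => (continuous_apply (n + 1)).comp continuous_subtype_val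

theorem mem_cylOf_self (x : MarkovShift A) (m : ℕ) : x ∈ cylOf x m := fun _ _ => rfl

theorem isOpen_cylOf (x : MarkovShift A) (m : ℕ) : IsOpen (cylOf x m) := by
  have : cylOf x m = ⋂ i < m, (fun y : MarkovShift A => y.1 i) ⁻¹' {x.1 i} := by
    ext y; simp [cylOf]
  rw [this]
  exact (Set.finite_lt_nat m).isOpen_biInter fun i _ =>
    (isOpen_discrete _).preimage ((continuous_apply i).comp continuous_subtype_val)

theorem mem_cylOf_of_dist'_lt {r : ℝ} (hr0 : 0 ≤ r) (hr1 : r ≤ 1) {k : ℕ}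
    (h : dist' r x z < r ^ k) : z ∈ cylOf x k := by
  intro i hi
  by_contra hne
  have hxz : x ≠ z := by rintro rfl; exact hne rfl
  rw [dist', dif_neg hxz] at h
  have hdiff : firstDiff x z hxz ≤ i := Nat.find_min' _ (Ne.symm hne)
  exact h.not_ge (pow_le_pow_of_le_one hr0 hr1 (hdiff.trans hi.le))

theorem dist'_le_of_mem_cylOf {r : ℝ} (hr0 : 0 ≤ r) (hr1 : r ≤ 1) {k : ℕ}
    (h : z ∈ cylOf x k) : dist' r x z ≤ r ^ k := by
  rw [dist']
  split_ifs with hxz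
  · positivity
  · exact pow_le_pow_of_le_one hr0 hr1 ((Nat.le_find_iff _ _).2 fun i hi => not_not.2 (h i hi).symm)

/-- The point `a x₀ x₁ …` obtained by prepending the symbol `a` to `x`. -/
def cons (a : ℕ) (x : MarkovShift A) (h : A a (x.1 0) = true) : MarkovShift A :=
  ⟨fun | 0 => a | i + 1 => x.1 i, fun | 0 => h | i + 1 => x.2 i⟩

theorem exists_prepend (x : MarkovShift A) (n : ℕ) (u : ℕ → ℕ)
    (hu : ∀ i < n, A (u i) (u (i + 1)) = true) (hn : u n = x.1 0) :
    ∃ z : MarkovShift A, (∀ i ≤ n, z.1 i = u i) ∧ shift^[n] z = x := by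
  induction n generalizing u with
  | zero => exact ⟨x, fun i hi => by rw [Nat.le_zero.1 hi, hn], rfl⟩
  | succ n ih =>
    obtain ⟨z, hzu, hzx⟩ := ih (fun i => u (i + 1)) (fun i hi => hu (i + 1) (by omega)) hn
    refine ⟨cons (u 0) z (hzu 0 n.zero_le ▸ hu 0 n.succ_pos), fun i hi => ?_, hzx⟩
    cases i with
    | zero => rfl
    | succ i => exact hzu i (by omega)

theorem exists_periodic_of_apply_eq {n : ℕ} (hn : n ≠ 0) (h : z.1 n = z.1 0) :
    ∃ q : MarkovShift A, IsPeriodicPt shift n q ∧ ∀ i < n, q.1 i = z.1 i := by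
  have hstep (i : ℕ) : z.1 ((i + 1) % n) = z.1 (i % n + 1) := by
    rcases eq_or_ne (i % n + 1) n with hi | hi
    · rw [← Nat.mod_add_mod, hi, Nat.mod_self, h]
    · have := Nat.mod_lt i (Nat.pos_of_ne_zero hn)
      rw [← Nat.mod_add_mod, Nat.mod_eq_of_lt (by omega)]
  let q : MarkovShift A := ⟨fun i => z.1 (i % n), fun i => by
    change A (z.1 (i % n)) (z.1 ((i + 1) % n)) = true
    rw [hstep]
    exact z.2 _⟩
  exact ⟨q, ext fun i => (iterate_shift_apply n q i).trans (congrArg z.1 (Nat.add_mod_right i n)),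
    fun i hi => congrArg z.1 (Nat.mod_eq_of_lt hi)⟩

theorem mem_cylOf_of_iterate {n k : ℕ} (hpre : z ∈ cylOf x n)
    (htail : shift^[n] z ∈ cylOf (shift^[n] x) k) : z ∈ cylOf x (n + k) := by
  intro i hi
  rcases lt_or_ge i n with hin | hni
  · exact hpre i hin
  · have := htail (i - n) (by omega)
    rwa [iterate_shift_apply, iterate_shift_apply, Nat.sub_add_cancel hni] at this

theorem exists_periodic_of_iterate_mem_cylOf {n k : ℕ} (hn : n ≠ 0) (hk : k ≠ 0)
    (h : shift^[n] z ∈ cylOf z k) :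
    ∃ q : MarkovShift A, IsPeriodicPt shift n q ∧ z ∈ cylOf q (n + k) := by
  have hper (i : ℕ) (hi : i < k) : z.1 (i + n) = z.1 i :=
    (iterate_shift_apply n z i).symm.trans (h i hi)
  obtain ⟨q, hq, hqz⟩ := exists_periodic_of_apply_eq hn
    (Nat.zero_add n ▸ hper 0 (Nat.pos_of_ne_zero hk))
  refine ⟨q, hq, fun i => ?_⟩
  induction i using Nat.strong_induction_on with
  | _ i ih =>
    intro hi
    rcases lt_or_ge i n with hin | hni
    · exact (hqz i hin).symm
    · obtain ⟨j, rfl⟩ := Nat.exists_eq_add_of_le' hni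
      rw [hper j (by omega), ih j (by omega) (by omega), ← iterate_shift_apply, hq.eq]

theorem FinitelyPrimitive.exists_bridge (h : FinitelyPrimitive A) :
    ∃ (K : ℕ) (F : Finset ℕ), ∀ x y : MarkovShift A, ∃ z : MarkovShift A,
      z.1 0 = x.1 0 ∧ shift^[K + 1] z = y ∧ ∀ i, 0 < i → i ≤ K → z.1 i ∈ F := by
  obtain ⟨K, F, hKF⟩ := h
  refine ⟨K, F, fun x y => ?_⟩
  obtain ⟨w, rfl, hwF, hw⟩ := hKF (x.1 0) (y.1 0) ⟨x, rfl⟩ ⟨y, rfl⟩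
  let u : ℕ → ℕ := fun i => (x.1 0 :: (w ++ [y.1 0])).getD i 0
  have hu : ∀ i < w.length + 1, A (u i) (u (i + 1)) = true := fun i hi => by
    have hi' : i + 1 < (x.1 0 :: (w ++ [y.1 0])).length := by simpa using hi
    simp only [u, List.getD_eq_getElem _ _ hi', List.getD_eq_getElem _ _ (i.lt_succ_self.trans hi')]
    exact List.isChain_iff_getElem.1 hw i hi'
  obtain ⟨z, hzu, hzy⟩ := exists_prepend y (w.length + 1) u hu (by simp [u])
  refine ⟨z, hzu 0 (Nat.zero_le _), hzy, fun i hi hiw => ?_⟩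
  obtain ⟨j, rfl⟩ := Nat.exists_eq_add_one.2 hi
  rw [hzu _ (by omega)]
  have hj : j < w.length := hiw
  simpa [u, List.getElem?_append, hj] using hwF _ (w.getElem_mem hj)

theorem FinitelyPrimitive.exists_loop (h : FinitelyPrimitive A) (x : MarkovShift A) :
    ∃ (n m : ℕ) (G : Finset ℕ), m < n ∧ ∀ y : MarkovShift A, ∃ q : MarkovShift A,
      IsPeriodicPt shift n q ∧ q.1 0 = x.1 0 ∧ q.1 m = y.1 0 ∧
        ∀ j < n, j ≠ m → q.1 j ∈ G := by
  obtain ⟨K, F, hbridge⟩ := h.exists_bridge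
  refine ⟨(K + 1) + (K + 1), K + 1, insert (x.1 0) F, by omega, fun y => ?_⟩
  obtain ⟨z', hz'y, hz'x, hz'F⟩ := hbridge y x
  obtain ⟨z, hzx, hzz', hzF⟩ := hbridge x z'
  have hz (i : ℕ) : z.1 (i + (K + 1)) = z'.1 i := by rw [← hzz', iterate_shift_apply]
  have hz'0 : z'.1 (K + 1) = x.1 0 := by
    rw [← hz'x, iterate_shift_apply, Nat.zero_add]
  obtain ⟨q, hq, hqz⟩ := exists_periodic_of_apply_eq (z := z) (n := (K + 1) + (K + 1)) (by omega)
    (by rw [hz, hz'0, hzx])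
  refine ⟨q, hq, by rw [hqz 0 (by omega), hzx], ?_, fun j hj hjm => ?_⟩
  · rw [hqz _ (by omega), ← Nat.zero_add (K + 1), hz, hz'y]
  rw [hqz j hj]
  rcases Nat.eq_zero_or_pos j with rfl | hj0
  · exact hzx ▸ Finset.mem_insert_self _ _
  rcases lt_or_gt_of_ne hjm with hlt | hgt
  · exact Finset.mem_insert_of_mem (hzF j hj0 (by omega))
  · obtain ⟨i, rfl⟩ := Nat.exists_eq_add_of_lt hgt
    rw [show K + 1 + i + 1 = i + 1 + (K + 1) by ring, hz]
    exact Finset.mem_insert_of_mem (hz'F _ (by omega) (by omega))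

end Shift

section Potential

open Function

variable {A : ℕ → ℕ → Bool} {f : MarkovShift A → ℝ} {x y : MarkovShift A}

theorem birkhoff_sub_const (f : MarkovShift A → ℝ) (c : ℝ) (n : ℕ) (x : MarkovShift A) :
    birkhoff (fun w => f w - c) n x = birkhoff f n x - n * c := by
  simp only [birkhoff, Finset.sum_sub_distrib, Finset.sum_const, Finset.card_range, nsmul_eq_mul]

theorem birkhoff_one (f : MarkovShift A → ℝ) (x : MarkovShift A) : birkhoff f 1 x = f x :=
  Finset.sum_range_one _

theorem SatisfiesWalters.abs_birkhoff_sub_le (hW : SatisfiesWalters f) {n k : ℕ} (hn : 1 ≤ n)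
    (hk : 1 ≤ k) (h : y ∈ cylOf x (n + k)) :
    |birkhoff f n y - birkhoff f n x| ≤ waltersSup f k :=
  le_csSup (hW.1 k hk) ⟨n, hn, y, x, h, rfl⟩

theorem SatisfiesWalters.eventually_waltersSup_lt (hW : SatisfiesWalters f) {δ : ℝ} (hδ : 0 < δ) :
    ∀ᶠ k in atTop, 1 ≤ k ∧ waltersSup f k < δ :=
  (eventually_ge_atTop 1).and (hW.2.eventually_lt_const hδ)

theorem SatisfiesWalters.continuous (hW : SatisfiesWalters f) : Continuous f := by
  refine continuous_iff_continuousAt.2 fun x => Metric.continuousAt_iff'.2 fun δ hδ => ?_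
  obtain ⟨k, hk, hkδ⟩ := (hW.eventually_waltersSup_lt hδ).exists
  filter_upwards [(isOpen_cylOf x (1 + k)).mem_nhds (mem_cylOf_self x _)] with y hy
  have := hW.abs_birkhoff_sub_le le_rfl hk hy
  rw [birkhoff_one, birkhoff_one] at this
  exact this.trans_lt hkδ

theorem Var1Finite.exists_abs_sub_le (h : Var1Finite f) :
    ∃ V, ∀ x y : MarkovShift A, x.1 0 = y.1 0 → |f x - f y| ≤ V := by
  obtain ⟨V, hV⟩ := h
  refine ⟨V, fun x y hxy => hV ⟨x, y, fun i hi => ?_, ?_⟩⟩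
  · rwa [Nat.lt_one_iff.1 hi]
  · rw [birkhoff_one, birkhoff_one]

theorem Var1Finite.bddBelow_image (h : Var1Finite f) {G : Set ℕ} (hG : G.Finite) :
    BddBelow (f '' {y | y.1 0 ∈ G}) := by
  obtain ⟨V, hV⟩ := h.exists_abs_sub_le
  have hsymbol (a : ℕ) : BddBelow (f '' {y | y.1 0 = a}) := by
    rcases Set.eq_empty_or_nonempty {y : MarkovShift A | y.1 0 = a} with hempty | ⟨x, hx⟩
    · rw [hempty, Set.image_empty]
      exact bddBelow_empty
    · refine ⟨f x - V, Set.forall_mem_image.2 fun y hy => ?_⟩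
      exact sub_le_of_abs_sub_le_right (hV x y (hx.trans hy.symm))
  have hunion : {y : MarkovShift A | y.1 0 ∈ G} = ⋃ a ∈ G, {y | y.1 0 = a} :=
    (Set.biUnion_preimage_singleton (fun y : MarkovShift A => y.1 0) G).symm
  rw [hunion, Set.image_iUnion₂, hG.bddBelow_biUnion]
  exact fun a _ => hsymbol a

theorem birkhoff_le_partitionSum {n : ℕ} {q : MarkovShift A} (hq : IsPeriodicPt shift n q)
    (hsum : Summable fun x : {x : MarkovShift A // shift^[n] x = x ∧ x.1 0 = q.1 0} =>
      Real.exp (birkhoff f n x.1)) :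
    birkhoff f n q ≤ partitionSum f n (q.1 0) :=
  calc birkhoff f n q ≤ birkhoff f n q + 1 := by linarith
    _ ≤ Real.exp (birkhoff f n q) := Real.add_one_le_exp _
    _ ≤ partitionSum f n (q.1 0) :=
      hsum.le_tsum ⟨q, hq, rfl⟩ fun _ _ => (Real.exp_pos _).le

-- Each `y` shares its first symbol with a point of a periodic orbit of fixed period `n` through
-- `x₀`, all of whose other points start in a fixed finite set; a single term of `Z_n(f, x₀)` then
-- controls `f y`.
theorem bddAbove_range (hA : FinitelyPrimitive A) (hf : Var1Finite f)
    (hsum : ∀ a, Admissible A a → ∀ n, 1 ≤ n →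
      Summable fun x : {x : MarkovShift A // shift^[n] x = x ∧ x.1 0 = a} =>
        Real.exp (birkhoff f n x.1)) :
    BddAbove (Set.range f) := by
  rcases isEmpty_or_nonempty (MarkovShift A) with _ | ⟨⟨x⟩⟩
  · rw [Set.range_eq_empty]
    exact bddAbove_empty
  obtain ⟨n, m, G, hmn, hloop⟩ := hA.exists_loop x
  obtain ⟨V, hV⟩ := hf.exists_abs_sub_le
  obtain ⟨D, hD⟩ := hf.bddBelow_image G.finite_toSet
  refine ⟨partitionSum f n (x.1 0) - ((Finset.range n).erase m).card • D + V,
    Set.forall_mem_range.2 fun y => ?_⟩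
  obtain ⟨q, hq, hq0, hqm, hqG⟩ := hloop y
  have hbirkhoff : birkhoff f n q ≤ partitionSum f n (x.1 0) :=
    hq0 ▸ birkhoff_le_partitionSum hq (hsum _ ⟨q, rfl⟩ n (by omega))
  have hshift0 (j : ℕ) : (shift^[j] q).1 0 = q.1 j := by
    rw [iterate_shift_apply, Nat.zero_add]
  have hmem : m ∈ Finset.range n := Finset.mem_range.2 hmn
  have hrest : ((Finset.range n).erase m).card • D ≤
      ∑ j ∈ (Finset.range n).erase m, f (shift^[j] q) := by
    refine Finset.card_nsmul_le_sum _ _ D fun j hj => hD (Set.mem_image_of_mem f ?_)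
    rw [Finset.mem_erase, Finset.mem_range] at hj
    change (shift^[j] q).1 0 ∈ G
    exact hshift0 j ▸ hqG j hj.2 hj.1
  have hsplit : f (shift^[m] q) + ∑ j ∈ (Finset.range n).erase m, f (shift^[j] q) =
      birkhoff f n q := Finset.add_sum_erase _ (fun j => f (shift^[j] q)) hmem
  have hy : |f (shift^[m] q) - f y| ≤ V := hV _ _ ((hshift0 m).trans hqm)
  linarith [(abs_le.1 hy).1]

/-- The values `∫ f dν` over the invariant probability measures `ν` for which `f` is integrable, so
that `m(f)` is the supremum of this set. -/
def invariantIntegrals (f : MarkovShift A → ℝ) : Set ℝ :=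
  {c | ∃ μ : Measure (MarkovShift A), IsInvariantProb μ ∧ Integrable f μ ∧ ∫ x, f x ∂μ = c}

theorem bddAbove_invariantIntegrals (hf : BddAbove (Set.range f)) :
    BddAbove (invariantIntegrals f) := by
  obtain ⟨C, hC⟩ := hf
  refine ⟨C, ?_⟩
  rintro _ ⟨μ, ⟨_, -⟩, hfi, rfl⟩
  simpa using integral_mono hfi (integrable_const C) (Set.forall_mem_range.1 hC)

theorem IsInvariantProb.measurePreserving {μ : Measure (MarkovShift A)} (hμ : IsInvariantProb μ) :
    MeasurePreserving shift μ μ :=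
  ⟨continuous_shift.measurable, hμ.2⟩

theorem integral_le_mf (hf : BddAbove (invariantIntegrals f)) {μ : Measure (MarkovShift A)}
    [IsProbabilityMeasure μ] (hμ : MeasurePreserving shift μ μ) (hfi : Integrable f μ) :
    ∫ x, f x ∂μ ≤ mf f :=
  le_csSup hf ⟨μ, ⟨inferInstance, hμ.map_eq⟩, hfi, rfl⟩

theorem integral_le_measureReal_univ_mul_mf (hf : BddAbove (invariantIntegrals f))
    {μ : Measure (MarkovShift A)} [IsFiniteMeasure μ] (hμ : MeasurePreserving shift μ μ)
    (hfi : Integrable f μ) : ∫ x, f x ∂μ ≤ μ.real Set.univ * mf f := by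
  rcases eq_or_ne μ 0 with rfl | h0
  · simp
  have : NeZero μ := ⟨h0⟩
  have hle := integral_le_mf (μ := (μ Set.univ)⁻¹ • μ) hf (hμ.smul_measure _)
    (hfi.smul_measure (ENNReal.inv_ne_top.2 (Measure.measure_univ_ne_zero.2 h0)))
  rw [integral_smul_measure, ENNReal.toReal_inv, smul_eq_mul,
    inv_mul_le_iff₀ (ENNReal.toReal_pos (Measure.measure_univ_ne_zero.2 h0)
      (measure_ne_top _ _))] at hle
  exact hle

theorem birkhoff_le_mul_mf_of_isPeriodicPt (hf : BddAbove (invariantIntegrals f))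
    (hfm : Measurable f) {n : ℕ} (hn : n ≠ 0) {q : MarkovShift A}
    (hq : IsPeriodicPt shift n q) : birkhoff f n q ≤ n * mf f := by
  have := isProbabilityMeasure_orbitMeasure (T := shift) hn q
  have hle := integral_le_mf hf (measurePreserving_orbitMeasure continuous_shift.measurable hq)
    (integrable_orbitMeasure hfm.stronglyMeasurable n q)
  rw [integral_orbitMeasure hfm.stronglyMeasurable, birkhoffAverage, smul_eq_mul,
    inv_mul_le_iff₀ (by positivity)] at hle
  exact hle

theorem IsMaximizing.setIntegral_sub_mf_nonneg (hf : BddAbove (invariantIntegrals f))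
    {μ : Measure (MarkovShift A)} (hμ : IsMaximizing f μ) {B : Set (MarkovShift A)}
    (hB : MeasurableSet B) (hinv : shift ⁻¹' B = B) : 0 ≤ ∫ x in B, (f x - mf f) ∂μ := by
  obtain ⟨hprob, hfi, hmax⟩ := hμ
  have := hprob.1
  have hgi : Integrable (fun x => f x - mf f) μ := hfi.sub (integrable_const _)
  have hcompl : ∫ x in Bᶜ, (f x - mf f) ∂μ ≤ 0 := by
    have hpres : MeasurePreserving shift (μ.restrict Bᶜ) (μ.restrict Bᶜ) := by
      simpa only [Set.preimage_compl, hinv] using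
        hprob.measurePreserving.restrict_preimage hB.compl
    have hle := integral_le_measureReal_univ_mul_mf hf hpres hfi.restrict
    rw [integral_sub hfi.restrict (integrable_const _), integral_const, smul_eq_mul]
    exact sub_nonpos.2 hle
  have htotal : ∫ x, (f x - mf f) ∂μ = 0 := by
    simp [integral_sub hfi (integrable_const _), hmax]
  linarith [integral_add_compl hB hgi]

theorem IsMaximizing.exists_return_lt_birkhoff (hf : BddAbove (invariantIntegrals f))
    (hfm : Measurable f) {μ : Measure (MarkovShift A)} (hμ : IsMaximizing f μ)
    {U : Set (MarkovShift A)} (hU : MeasurableSet U) (hU0 : μ U ≠ 0) {c : ℝ} (hc : c < 0) :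
    ∃ x ∈ U, ∃ n, 1 ≤ n ∧ shift^[n] x ∈ U ∧ c < birkhoff (fun w => f w - mf f) n x := by
  have := hμ.1.1
  exact exists_return_lt_birkhoffSum hμ.1.measurePreserving (hfm.sub_const _)
    (hμ.2.1.sub (integrable_const _)) (fun B hB hinv => hμ.setIntegral_sub_mf_nonneg hf hB hinv)
    hU hU0 hc

end Potential

section ManePotential

variable {A : ℕ → ℕ → Bool} {f : MarkovShift A → ℝ} {r : ℝ} {x y : MarkovShift A}

theorem manePot_le {ε : ℝ} (hε : 0 < ε) {b : EReal}
    (h : ∀ n, 1 ≤ n → ∀ z : MarkovShift A, dist' r x z < ε → shift^[n] z = y →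
      ((birkhoff (fun w => f w - mf f) n z : ℝ) : EReal) ≤ b) :
    manePot r f x y ≤ b :=
  (iInf_le _ ⟨ε, hε⟩).trans <| iSup_le fun n => iSup_le fun z => h n n.2 z z.2.1 z.2.2

theorem le_manePot {b : EReal}
    (h : ∀ ε : ℝ, 0 < ε → ∃ n, 1 ≤ n ∧ ∃ z : MarkovShift A, dist' r x z < ε ∧ shift^[n] z = y ∧
      b ≤ (birkhoff (fun w => f w - mf f) n z : ℝ)) :
    b ≤ manePot r f x y := by
  refine le_iInf fun ε => ?_
  obtain ⟨n, hn, z, hxz, hzy, hb⟩ := h ε ε.2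
  exact le_iSup_of_le ⟨n, hn⟩ (le_iSup_of_le ⟨z, hxz, hzy⟩ hb)

theorem manePot_self_nonpos (hr0 : 0 < r) (hr1 : r ≤ 1) (hW : SatisfiesWalters f)
    (hf : BddAbove (invariantIntegrals f)) (x : MarkovShift A) : manePot r f x x ≤ 0 := by
  refine EReal.le_of_forall_lt_iff_le.1 fun δ hδ => ?_
  obtain ⟨k, hk, hkδ⟩ := (hW.eventually_waltersSup_lt (EReal.coe_pos.1 hδ)).exists
  refine manePot_le (pow_pos hr0 k) fun n hn z hxz hzx => EReal.coe_le_coe_iff.2 ?_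
  have hzk : z ∈ cylOf x k := mem_cylOf_of_dist'_lt hr0.le hr1 hxz
  have hzz : shift^[n] z ∈ cylOf z k := fun i hi => by rw [hzx, hzk i hi]
  obtain ⟨q, hq, hzq⟩ := exists_periodic_of_iterate_mem_cylOf (Nat.one_le_iff_ne_zero.1 hn)
    (Nat.one_le_iff_ne_zero.1 hk) hzz
  have hle := birkhoff_le_mul_mf_of_isPeriodicPt hf hW.continuous.measurable
    (Nat.one_le_iff_ne_zero.1 hn) hq
  rw [birkhoff_sub_const]
  linarith [(abs_le.1 (hW.abs_birkhoff_sub_le hn hk hzq)).2]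

theorem manePot_self_nonneg (hr0 : 0 ≤ r) (hr1 : r < 1) (hW : SatisfiesWalters f)
    (hreturn : ∀ k, ∀ c < 0, ∃ w ∈ cylOf x k, ∃ n, 1 ≤ n ∧ shift^[n] w ∈ cylOf x k ∧
      c < birkhoff (fun w => f w - mf f) n w) : 0 ≤ manePot r f x x := by
  refine EReal.ge_of_forall_gt_iff_ge.1 fun δ hδ => le_manePot fun ε hε => ?_
  have hδ' : 0 < -δ / 2 := by linarith [EReal.coe_neg'.1 hδ]
  obtain ⟨k, ⟨hk, hkδ⟩, hkε⟩ := ((hW.eventually_waltersSup_lt hδ').and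
    ((tendsto_pow_atTop_nhds_zero_of_lt_one hr0 hr1).eventually_lt_const hε)).exists
  obtain ⟨w, hw, n, hn, hwn, hsum⟩ := hreturn k (δ / 2) (by linarith)
  have hwn0 : w.1 n = x.1 0 := by
    rw [← hwn 0 hk, iterate_shift_apply, Nat.zero_add]
  obtain ⟨z, hzw, hzx⟩ := exists_prepend x n w.1 (fun i _ => w.2 i) hwn0
  have hz : z ∈ cylOf w (n + k) :=
    mem_cylOf_of_iterate (fun i hi => hzw i hi.le) fun i hi => hzx ▸ (hwn i hi).symm
  have hxz : z ∈ cylOf x k := fun i hi => (hz i (by omega)).trans (hw i hi)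
  refine ⟨n, hn, z, (dist'_le_of_mem_cylOf hr0 hr1.le hxz).trans_lt hkε, hzx,
    EReal.coe_le_coe_iff.2 ?_⟩
  rw [birkhoff_sub_const] at hsum ⊢
  linarith [(abs_le.1 (hW.abs_birkhoff_sub_le hn hk hz)).1]

end ManePotential

theorem support_subset_aubry_general {A : ℕ → ℕ → Bool} {r : ℝ} (hr0 : 0 < r) (hr1 : r < 1)
    {f : MarkovShift A → ℝ} (hW : SatisfiesWalters f) (hf : BddAbove (invariantIntegrals f))
    {μ : Measure (MarkovShift A)} (hμ : IsMaximizing f μ) :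
    msupport μ ⊆ {x : MarkovShift A | manePot r f x x = 0} := by
  intro x hx
  have hreturn (k : ℕ) (c : ℝ) (hc : c < 0) :=
    hμ.exists_return_lt_birkhoff hf hW.continuous.measurable (isOpen_cylOf x k).measurableSet
      (hx _ (isOpen_cylOf x k) (mem_cylOf_self x k)).ne' hc
  exact le_antisymm (manePot_self_nonpos hr0 hr1.le hW hf x)
    (manePot_self_nonneg hr0.le hr1 hW hreturn)

/-- The support of any maximizing measure is contained in the Aubry set
`Ω(f,σ) = {x : S_f(x,x) = 0}`. -/
theorem support_subset_aubry
    (A : ℕ → ℕ → Bool) (r : ℝ) (hr0 : 0 < r) (hr1 : r < 1)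
    (hmix : TopologicallyMixing A)
    (hbip : FinitelyPrimitive A)
    (f : MarkovShift A → ℝ)
    (hWalters : SatisfiesWalters f)
    (hVar1 : Var1Finite f)
    (p : ℝ)
    (hPfin : HasGurevichPressure f p) :
    ∀ μ : Measure (MarkovShift A), IsMaximizing f μ →
      msupport μ ⊆ {x : MarkovShift A | manePot r f x x = 0} := by
  have hf := bddAbove_range hbip hVar1 fun a ha => (hPfin a ha).1
  exact fun μ hμ =>
    support_subset_aubry_general hr0 hr1 hWalters (bddAbove_invariantIntegrals hf) hμ

end MarkovShift
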